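/- Let 𝓈 be a sign assignment on a generalized cube Cube and let g be an edge-preserving involution of Cube (g ∘ g = id). Define functions 𝓈₃ and 𝓈₄ on the edges of Cube × {0,1}² as follows: 𝓈₃((I₁,x₁,y₁),(I₂,x₂,y₂)) equals 0 if y₂ = y₁ + 1; equals y₁ if y₁ = y₂ and x₂ = x₁ + 1; and equals 𝓈(I₁,I₂) + x₁ + y₁ if x₁ = x₂, y₁ = y₂ and (I₁,I₂) is an edge of Cube. Similarly 𝓈₄((I₁,x₁,y₁),(I₂,x₂,y₂)) equals 0 if x₂ = x₁ + 1; equals x₁ if x₁ = x₂ and y₂ = y₁ + 1; and equals 𝓈(gI₁,gI₂) + x₁ + y₁ if x₁ = x₂, y₁ = y₂ and (I₁,I₂) is an edge of Cube. Then: (a) 𝓈₄(ĝJ,ĝJ') = 𝓈₃(J,J') for every edge (J,J') of Cube × {0,1}², where ĝ(I,x,y) := (gI,y,x); (b) if moreover 𝓉 : Cube → 𝔽₂ satisfies 𝓈(I,I') + 𝓈(gI,gI') = 𝓉(I) + 𝓉(I') for every edge (I,I') of Cube, then 𝓈₃ − 𝓈₄ = ∂𝓉' where 𝓉'(I,x,y)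 := 𝓉(I) + x·y, i.e. 𝓈₃(J,J') + 𝓈₄(J,J') = 𝓉'(J) + 𝓉'(J') for every edge (J,J'). -/

import Mathlib

/-!
An edge of `Cube × {0,1}²` points along the cube, along `x`, or along `y`. The map `ĝ` acts on the
first type by `g` and swaps the other two. For the invariance under `ĝ`, an edge along `x` at height
`y` gets the value `y` from `𝓈₃` and becomes, under `ĝ`, an edge along `y` whose `x`-coordinate is
that `y`; an edge along the cube uses `g ∘ g = id`. For the coboundary identity, the `𝓉`-part gives
the difference on cube edges, where the shifts `x + y` cancel in characteristic two, and `x * y`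
changes by `y` along `x` and by `x` along `y`, which is exactly `𝓈₃ + 𝓈₄` there.
-/

/-- The generalized cube: functions `I : ι → ℤ` with `lo i ≤ I i ≤ hi i` for all `i`. -/
def Cube {ι : Type*} (lo hi : ι → ℤ) : Set (ι → ℤ) :=
  {I | ∀ i, lo i ≤ I i ∧ I i ≤ hi i}

/-- `I'` is an immediate successor of `I`: exactly one coordinate increases by `1`. -/
def IsSucc {ι : Type*} (I I' : ι → ℤ) : Prop :=
  ∃ j, I' j = I j + 1 ∧ ∀ k, k ≠ j → I' k = I k

/-- A sign assignment on the cube. -/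
def IsSignAssignment {ι : Type*} (lo hi : ι → ℤ)
    (s : (ι → ℤ) → (ι → ℤ) → ZMod 2) : Prop :=
  ∀ I I₁ I₂ I₁₂ : ι → ℤ, I ∈ Cube lo hi → I₁ ∈ Cube lo hi → I₂ ∈ Cube lo hi →
    I₁₂ ∈ Cube lo hi → I₁ ≠ I₂ → IsSucc I I₁ → IsSucc I I₂ → IsSucc I₁ I₁₂ →
    IsSucc I₂ I₁₂ →
    s I I₁ + s I I₂ + s I₁ I₁₂ + s I₂ I₁₂ = 1

/-- The extended cube `Cube × {0,1}²`: vertices are triples `(I,x,y)` with `I` in the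
cube and `x, y ∈ {0,1}`. -/
def CubeE2 {ι : Type*} (lo hi : ι → ℤ) : Set ((ι → ℤ) × ℤ × ℤ) :=
  {J | J.1 ∈ Cube lo hi ∧ (0 ≤ J.2.1 ∧ J.2.1 ≤ 1) ∧ (0 ≤ J.2.2 ∧ J.2.2 ≤ 1)}

/-- Immediate successor relation on `Cube × {0,1}²`. -/
def IsSuccE2 {ι : Type*} (J J' : (ι → ℤ) × ℤ × ℤ) : Prop :=
  (IsSucc J.1 J'.1 ∧ J'.2 = J.2) ∨
  (J'.1 = J.1 ∧ J'.2.1 = J.2.1 + 1 ∧ J'.2.2 = J.2.2) ∨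
  (J'.1 = J.1 ∧ J'.2.1 = J.2.1 ∧ J'.2.2 = J.2.2 + 1)

/-- Key sign lemma for the equivariant Reidemeister 1 move (`m = 2`):
(a) `𝓈₄(ĝJ, ĝJ') = 𝓈₃(J, J')` on every edge of `Cube × {0,1}²`, where
`ĝ(I,x,y) = (gI,y,x)`; (b) if `𝓈 − g𝓈 = ∂𝓉` then `𝓈₃ − 𝓈₄ = ∂𝓉'` with
`𝓉'(I,x,y) = 𝓉(I) + xy`. -/
theorem reidemeister_one_sign_lemma {ι : Type*} [Fintype ι]
    (lo hi : ι → ℤ) (hlohi : ∀ i, lo i ≤ hi i)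
    (s : (ι → ℤ) → (ι → ℤ) → ZMod 2) (hs : IsSignAssignment lo hi s)
    (g : (ι → ℤ) → (ι → ℤ))
    (hgbij : Set.BijOn g (Cube lo hi) (Cube lo hi))
    (hginv : ∀ I, I ∈ Cube lo hi → g (g I) = I)
    (hgsucc : ∀ I I', I ∈ Cube lo hi → I' ∈ Cube lo hi → IsSucc I I' →
      IsSucc (g I) (g I'))
    (hgsucc' : ∀ I I', I ∈ Cube lo hi → I' ∈ Cube lo hi → IsSucc (g I) (g I') →
      IsSucc I I')
    (s₃ s₄ : ((ι → ℤ) × ℤ × ℤ) → ((ι → ℤ) × ℤ × ℤ) → ZMod 2)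
    (hs₃a : ∀ I x y, (I, x, y) ∈ CubeE2 lo hi → (I, x, y + 1) ∈ CubeE2 lo hi →
      s₃ (I, x, y) (I, x, y + 1) = 0)
    (hs₃b : ∀ I x y, (I, x, y) ∈ CubeE2 lo hi → (I, x + 1, y) ∈ CubeE2 lo hi →
      s₃ (I, x, y) (I, x + 1, y) = (y : ZMod 2))
    (hs₃c : ∀ I I' x y, (I, x, y) ∈ CubeE2 lo hi → (I', x, y) ∈ CubeE2 lo hi →
      IsSucc I I' →
      s₃ (I, x, y) (I', x, y) = s I I' + (x : ZMod 2) + (y : ZMod 2))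
    (hs₄a : ∀ I x y, (I, x, y) ∈ CubeE2 lo hi → (I, x + 1, y) ∈ CubeE2 lo hi →
      s₄ (I, x, y) (I, x + 1, y) = 0)
    (hs₄b : ∀ I x y, (I, x, y) ∈ CubeE2 lo hi → (I, x, y + 1) ∈ CubeE2 lo hi →
      s₄ (I, x, y) (I, x, y + 1) = (x : ZMod 2))
    (hs₄c : ∀ I I' x y, (I, x, y) ∈ CubeE2 lo hi → (I', x, y) ∈ CubeE2 lo hi →
      IsSucc I I' →
      s₄ (I, x, y) (I', x, y) = s (g I) (g I') + (x : ZMod 2) + (y : ZMod 2)) :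
    (∀ J J', J ∈ CubeE2 lo hi → J' ∈ CubeE2 lo hi → IsSuccE2 J J' →
      s₄ (g J.1, J.2.2, J.2.1) (g J'.1, J'.2.2, J'.2.1) = s₃ J J') ∧
    (∀ t : (ι → ℤ) → ZMod 2,
      (∀ I I', I ∈ Cube lo hi → I' ∈ Cube lo hi → IsSucc I I' →
        s I I' + s (g I) (g I') = t I + t I') →
      ∀ J J', J ∈ CubeE2 lo hi → J' ∈ CubeE2 lo hi → IsSuccE2 J J' →
        s₃ J J' + s₄ J J' =
          (t J.1 + (J.2.1 : ZMod 2) * (J.2.2 : ZMod 2)) +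
          (t J'.1 + (J'.2.1 : ZMod 2) * (J'.2.2 : ZMod 2))) := by
  constructor
  · rintro ⟨I, x, y⟩ ⟨I', x', y'⟩ ⟨hI, hx, hy⟩ ⟨hI', hx', hy'⟩ h
    have hgI := hgbij.mapsTo hI
    have hgI' := hgbij.mapsTo hI'
    rcases h with ⟨h, e⟩ | ⟨e, ex, ey⟩ | ⟨e, ex, ey⟩
    · obtain ⟨rfl, rfl⟩ := Prod.mk.inj e
      have h3 := hs₃c I I' x' y' ⟨hI, hx, hy⟩ ⟨hI', hx', hy'⟩ h
      have h4 := hs₄c (g I) (g I') y' x' ⟨hgI, hy, hx⟩ ⟨hgI', hy', hx'⟩ (hgsucc I I' hI hI' h)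
      rw [hginv I hI, hginv I' hI'] at h4
      exact h4.trans ((add_right_comm _ _ _).trans h3.symm)
    · dsimp only at e ex ey
      subst e ex ey
      exact (hs₄b _ _ _ ⟨hgI, hy, hx⟩ ⟨hgI', hy', hx'⟩).trans
        (hs₃b _ _ _ ⟨hI, hx, hy⟩ ⟨hI', hx', hy'⟩).symm
    · dsimp only at e ex ey
      subst e ex ey
      exact (hs₄a _ _ _ ⟨hgI, hy, hx⟩ ⟨hgI', hy', hx'⟩).trans
        (hs₃a _ _ _ ⟨hI, hx, hy⟩ ⟨hI', hx', hy'⟩).symm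
  · rintro t ht ⟨I, x, y⟩ ⟨I', x', y'⟩ hJ hJ' h
    have two : (2 : ZMod 2) = 0 := rfl
    rcases h with ⟨h, e⟩ | ⟨e, ex, ey⟩ | ⟨e, ex, ey⟩
    · obtain ⟨rfl, rfl⟩ := Prod.mk.inj e
      rw [hs₃c I I' x' y' hJ hJ' h, hs₄c I I' x' y' hJ hJ' h]
      linear_combination ht I I' hJ.1 hJ'.1 h + ((x' : ZMod 2) + y' - x' * y') * two
    · dsimp only at e ex ey
      subst e ex ey
      rw [hs₃b _ _ _ hJ hJ', hs₄a _ _ _ hJ hJ']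
      push_cast
      linear_combination -(t I' + (x : ZMod 2) * y') * two
    · dsimp only at e ex ey
      subst e ex ey
      rw [hs₃a _ _ _ hJ hJ', hs₄b _ _ _ hJ hJ']
      push_cast
      linear_combination -(t I' + (x' : ZMod 2) * y) * two
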